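/- Let ν ≥ 1, let m ≥ 3 be an integer, let 2 ≤ p < m be a real number, and set k = ⌊p⌋ (so 2 ≤ k ≤ m − 1). Let f : S^{k−1} → ℝ^ν be Lipschitz. Define u on the open unit ball B^{m−1} ⊆ ℝ^{m−1} = ℝ^k × ℝ^{m−1−k} by u(x', x'') = f(x'/|x'|) for x' ≠ 0 (and arbitrarily on the null set {x' = 0}). Then E^{1−1/p, p}_{B^{m−1}}(u) = ∬_{B^{m−1}×B^{m−1}} |u(y) − u(x)|^p / |y − x|^{m+p−2} dy dx < ∞. -/

import Mathlib

open Metric Set MeasureTheory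
open scoped ENNReal

noncomputable section

/-!
Write `x = (x', x'')` with `x' ∈ E`. The radial projection `x' ↦ x' / |x'|` is bounded and has local
Lipschitz constant of order `1 / |x'|`, so interpolating between these two facts gives
`|u y - u x| ^ p ≤ C |x'| ^ (-θ) |y - x| ^ θ` for every `0 ≤ θ ≤ p`. The energy of `u` on a bounded
set is therefore at most a constant times `∬ |x'| ^ (-θ) |y - x| ^ (θ - s p - d) dy dx`, where
`d` is the total dimension. The integral in `y` is bounded uniformly in `x` when `s p < θ`, and
the remaining integral in `x` is finite when `θ < dim E`. Such a `θ` exists because `s p < p` and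
`s p < dim E`; for `s = 1 - 1 / p` the second condition reads `p - 1 < ⌊p⌋`.
-/

open Bornology Module NormedSpace

section Normalize

variable {E G : Type*} [NormedAddCommGroup E] [NormedSpace ℝ E] [SeminormedAddCommGroup G]

lemma norm_normalize_le_one (x : E) : ‖normalize x‖ ≤ 1 := by
  rcases eq_or_ne x 0 with rfl | hx
  · simp
  · exact (norm_normalize hx).le

lemma norm_normalize_sub_normalize_le_two (x y : E) : ‖normalize y - normalize x‖ ≤ 2 := by
  linarith [norm_sub_le (normalize y) (normalize x), norm_normalize_le_one x,
    norm_normalize_le_one y]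

lemma norm_mul_norm_normalize_sub_normalize_le (x y : E) :
    ‖x‖ * ‖normalize y - normalize x‖ ≤ 2 * ‖y - x‖ := by
  have hsplit : ‖x‖ • (normalize y - normalize x) = (‖x‖ - ‖y‖) • normalize y + (y - x) := by
    rw [smul_sub, sub_smul, norm_smul_normalize, norm_smul_normalize]
    abel
  calc ‖x‖ * ‖normalize y - normalize x‖
      = ‖(‖x‖ - ‖y‖) • normalize y + (y - x)‖ := by rw [← hsplit, norm_smul, norm_norm]
    _ ≤ |‖x‖ - ‖y‖| * ‖normalize y‖ + ‖y - x‖ := by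
      simpa only [norm_smul, Real.norm_eq_abs] using
        norm_add_le ((‖x‖ - ‖y‖) • normalize y) (y - x)
    _ ≤ ‖y - x‖ * 1 + ‖y - x‖ := by
      gcongr
      · exact norm_sub_rev y x ▸ abs_norm_sub_norm_le x y
      · exact norm_normalize_le_one y
    _ = 2 * ‖y - x‖ := by ring

lemma norm_normalize_sub_normalize_rpow_le {x : E} (hx : x ≠ 0) (y : E) {p θ : ℝ} (hθ : 0 ≤ θ)
    (hθp : θ ≤ p) :
    ‖normalize y - normalize x‖ ^ p ≤ 2 ^ p * ‖x‖ ^ (-θ) * ‖y - x‖ ^ θ := by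
  set D := ‖normalize y - normalize x‖
  have hD : 0 ≤ D := norm_nonneg _
  have hD_le : D ≤ 2 * ‖y - x‖ / ‖x‖ := by
    rw [le_div_iff₀' (norm_pos_iff.2 hx)]
    exact norm_mul_norm_normalize_sub_normalize_le x y
  calc D ^ p = D ^ (p - θ) * D ^ θ := by
        rw [← Real.rpow_add_of_nonneg hD (sub_nonneg.2 hθp) hθ, sub_add_cancel]
    _ ≤ 2 ^ (p - θ) * (2 * ‖y - x‖ / ‖x‖) ^ θ := by
      gcongr
      exact norm_normalize_sub_normalize_le_two x y
    _ = 2 ^ (p - θ) * 2 ^ θ * ‖x‖ ^ (-θ) * ‖y - x‖ ^ θ := by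
      rw [Real.div_rpow (by positivity) (by positivity), Real.mul_rpow (by positivity)
        (by positivity), Real.rpow_neg (by positivity)]
      ring
    _ = 2 ^ p * ‖x‖ ^ (-θ) * ‖y - x‖ ^ θ := by
      rw [← Real.rpow_add two_pos, sub_add_cancel]

lemma norm_comp_normalize_sub_rpow_le {f : E → G} {K : NNReal}
    (hf : LipschitzOnWith K f (sphere 0 1)) {x y : E} (hx : x ≠ 0) (hy : y ≠ 0) {p θ : ℝ}
    (hθ : 0 ≤ θ) (hθp : θ ≤ p) :
    ‖f (normalize y) - f (normalize x)‖ ^ p ≤ K ^ p * 2 ^ p * ‖x‖ ^ (-θ) * ‖y - x‖ ^ θ := by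
  have hp : 0 ≤ p := hθ.trans hθp
  have hLip : ‖f (normalize y) - f (normalize x)‖ ≤ K * ‖normalize y - normalize x‖ :=
    hf.norm_sub_le (mem_sphere_zero_iff_norm.2 (norm_normalize hy))
      (mem_sphere_zero_iff_norm.2 (norm_normalize hx))
  calc ‖f (normalize y) - f (normalize x)‖ ^ p
      ≤ (K * ‖normalize y - normalize x‖) ^ p := by gcongr
    _ = K ^ p * ‖normalize y - normalize x‖ ^ p := Real.mul_rpow K.2 (norm_nonneg _)
    _ ≤ K ^ p * (2 ^ p * ‖x‖ ^ (-θ) * ‖y - x‖ ^ θ) := by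
      gcongr
      exact norm_normalize_sub_normalize_rpow_le hx y hθ hθp
    _ = K ^ p * 2 ^ p * ‖x‖ ^ (-θ) * ‖y - x‖ ^ θ := by ring

end Normalize

section Energy

variable {X G : Type*} [NormedAddCommGroup X] [NormedSpace ℝ X] [MeasurableSpace X]
  [SeminormedAddCommGroup G]

/-- The Gagliardo energy `E^{s,p}_S(u)`, the `p`-th power of the fractional Sobolev `W^{s,p}`
seminorm of `u` on `S`, for the kernel given by the norm of `X`. It is valued in `ℝ≥0∞`, so that
finiteness has content. -/
def gagliardoEnergy (s p : ℝ) (μ : Measure X) (S : Set X) (u : X → G) : ℝ≥0∞ :=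
  ∫⁻ x in S, ∫⁻ y in S, ENNReal.ofReal (‖u y - u x‖ ^ p / ‖y - x‖ ^ (finrank ℝ X + s * p)) ∂μ ∂μ

variable [BorelSpace X] [FiniteDimensional ℝ X] [Nontrivial X] {μ : Measure X}
  [μ.IsAddHaarMeasure] {S : Set X}

lemma setLIntegral_norm_rpow_neg_lt_top {α : ℝ} (hα : α < finrank ℝ X) (hS : IsBounded S) :
    ∫⁻ x in S, ENNReal.ofReal (‖x‖ ^ (-α)) ∂μ < ⊤ := by
  obtain ⟨r, hr⟩ := hS.subset_ball 0
  have hint : IntegrableOn (fun x : X ↦ ‖x‖ ^ (-α)) (ball 0 r) μ := by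
    refine integrableOn_ball_of_norm_le_rpow (C := 1) finrank_pos hα (.of_forall fun x ↦ ?_)
      (measurable_norm.pow_const _).aestronglyMeasurable
    rw [Real.norm_of_nonneg (by positivity), one_mul]
  exact (hint.mono_set hr).lintegral_lt_top

lemma exists_ae_setLIntegral_norm_sub_rpow_neg_le {α : ℝ} (hα : α < finrank ℝ X)
    (hS : IsBounded S) :
    ∃ M < ⊤, ∀ᵐ x ∂μ.restrict S, ∫⁻ y in S, ENNReal.ofReal (‖y - x‖ ^ (-α)) ∂μ ≤ M := by
  obtain ⟨r, hr⟩ := hS.subset_ball 0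
  refine ⟨_, setLIntegral_norm_rpow_neg_lt_top (μ := μ) (S := ball 0 (r + r)) hα isBounded_ball, ?_⟩
  filter_upwards [ae_restrict_of_ae_restrict_of_subset hr (ae_restrict_mem measurableSet_ball)]
    with x hx
  have hsub : S ⊆ (· - x) ⁻¹' ball 0 (r + r) := fun y hy ↦ by
    have hy' := hr hy
    rw [mem_ball_zero_iff] at hx hy'
    rw [mem_preimage, mem_ball_zero_iff]
    linarith [norm_sub_le y x]
  calc ∫⁻ y in S, ENNReal.ofReal (‖y - x‖ ^ (-α)) ∂μ
      ≤ ∫⁻ y in (· - x) ⁻¹' ball 0 (r + r), ENNReal.ofReal (‖y - x‖ ^ (-α)) ∂μ :=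
        lintegral_mono_set hsub
    _ = ∫⁻ z in ball 0 (r + r), ENNReal.ofReal (‖z‖ ^ (-α)) ∂μ :=
        (measurePreserving_sub_right μ x).setLIntegral_comp_preimage_emb
          (measurableEmbedding_subRight x) (fun z ↦ ENNReal.ofReal (‖z‖ ^ (-α))) _

lemma gagliardoEnergy_lt_top_of_weighted_holder {s p θ : ℝ} (hθ : s * p < θ) (hS : IsBounded S)
    {u : X → G} {w : X → ℝ} (hw : ∫⁻ x in S, ENNReal.ofReal (w x) ∂μ < ⊤)
    (hu : ∀ᵐ x ∂μ, ∀ᵐ y ∂μ, ‖u y - u x‖ ^ p ≤ w x * ‖y - x‖ ^ θ) :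
    gagliardoEnergy s p μ S u < ⊤ := by
  set α : ℝ := finrank ℝ X + s * p - θ with hα
  obtain ⟨M, hM, hM_le⟩ :=
    exists_ae_setLIntegral_norm_sub_rpow_neg_le (μ := μ) (α := α) (by linarith) hS
  have hkernel {x y : X} (hyx : y ≠ x) (hxy : ‖u y - u x‖ ^ p ≤ w x * ‖y - x‖ ^ θ) :
      ‖u y - u x‖ ^ p / ‖y - x‖ ^ (finrank ℝ X + s * p) ≤ w x * ‖y - x‖ ^ (-α) := by
    have hpos : 0 < ‖y - x‖ := norm_pos_iff.2 (sub_ne_zero.2 hyx)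
    rw [div_le_iff₀ (by positivity), mul_assoc, ← Real.rpow_add hpos]
    rwa [show -α + (finrank ℝ X + s * p) = θ by rw [hα]; ring]
  have hinner : ∀ᵐ x ∂μ.restrict S,
      ∫⁻ y in S, ENNReal.ofReal (‖u y - u x‖ ^ p / ‖y - x‖ ^ (finrank ℝ X + s * p)) ∂μ ≤
        ENNReal.ofReal (w x) * M := by
    filter_upwards [hM_le, ae_restrict_of_ae hu] with x hxM hxu
    calc ∫⁻ y in S, ENNReal.ofReal (‖u y - u x‖ ^ p / ‖y - x‖ ^ (finrank ℝ X + s * p)) ∂μ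
        ≤ ∫⁻ y in S, ENNReal.ofReal (w x) * ENNReal.ofReal (‖y - x‖ ^ (-α)) ∂μ := by
          refine lintegral_mono_ae (ae_restrict_of_ae ?_)
          filter_upwards [hxu, Measure.ae_ne μ x] with y hxy hyx
          rw [← ENNReal.ofReal_mul' (by positivity)]
          exact ENNReal.ofReal_le_ofReal (hkernel hyx hxy)
      _ = ENNReal.ofReal (w x) * ∫⁻ y in S, ENNReal.ofReal (‖y - x‖ ^ (-α)) ∂μ :=
          lintegral_const_mul' _ _ ENNReal.ofReal_ne_top
      _ ≤ ENNReal.ofReal (w x) * M := by gcongr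
  calc gagliardoEnergy s p μ S u ≤ ∫⁻ x in S, ENNReal.ofReal (w x) * M ∂μ :=
        lintegral_mono_ae hinner
    _ = (∫⁻ x in S, ENNReal.ofReal (w x) ∂μ) * M := lintegral_mul_const' _ _ hM.ne
    _ < ⊤ := ENNReal.mul_lt_top hw hM

end Energy

section Product

variable {E F G : Type*} [NormedAddCommGroup E] [NormedAddCommGroup F] [SeminormedAddCommGroup G]

lemma norm_prod_le_sqrt (z : E × F) : ‖z‖ ≤ √(‖z.1‖ ^ 2 + ‖z.2‖ ^ 2) :=
  max_le (Real.le_sqrt_of_sq_le (le_add_of_nonneg_right (sq_nonneg _)))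
    (Real.le_sqrt_of_sq_le (le_add_of_nonneg_left (sq_nonneg _)))

lemma isBounded_setOf_norm_sq_add_norm_sq_lt (r : ℝ) :
    IsBounded {x : E × F | ‖x.1‖ ^ 2 + ‖x.2‖ ^ 2 < r} :=
  isBounded_iff_forall_norm_le.2
    ⟨√r, fun x hx ↦ (norm_prod_le_sqrt x).trans (Real.sqrt_le_sqrt (le_of_lt hx))⟩

variable [NormedSpace ℝ E] [NormedSpace ℝ F] [MeasurableSpace E] [MeasurableSpace F]

lemma lintegral_lintegral_sqrt_kernel_le_gagliardoEnergy {s p : ℝ} (hsp : 0 ≤ s * p)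
    (μ : Measure (E × F)) (S : Set (E × F)) (u : E × F → G) :
    ∫⁻ x in S, ∫⁻ y in S, ENNReal.ofReal (‖u y - u x‖ ^ p /
      √(‖y.1 - x.1‖ ^ 2 + ‖y.2 - x.2‖ ^ 2) ^ (finrank ℝ (E × F) + s * p)) ∂μ ∂μ ≤
      gagliardoEnergy s p μ S u := by
  refine lintegral_mono fun x ↦ lintegral_mono fun y ↦ ENNReal.ofReal_le_ofReal ?_
  rcases eq_or_ne y x with rfl | hyx
  · simp
  · have hpos : 0 < ‖y - x‖ := norm_pos_iff.2 (sub_ne_zero.2 hyx)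
    gcongr
    exact norm_prod_le_sqrt (y - x)

variable [BorelSpace E] [FiniteDimensional ℝ E] [FiniteDimensional ℝ F]
  {μ : Measure E} [μ.IsAddHaarMeasure] {ν : Measure F} [ν.IsAddHaarMeasure] {S : Set (E × F)}

lemma setLIntegral_norm_fst_rpow_neg_lt_top [Nontrivial E] {α : ℝ} (hα : α < finrank ℝ E)
    (hS : IsBounded S) :
    ∫⁻ x in S, ENNReal.ofReal (‖x.1‖ ^ (-α)) ∂μ.prod ν < ⊤ := by
  obtain ⟨hS₁, hS₂⟩ := isBounded_image_fst_and_snd.2 hS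
  calc ∫⁻ x in S, ENNReal.ofReal (‖x.1‖ ^ (-α)) ∂μ.prod ν
      ≤ ∫⁻ x in (Prod.fst '' S) ×ˢ (Prod.snd '' S), ENNReal.ofReal (‖x.1‖ ^ (-α)) ∂μ.prod ν :=
        lintegral_mono_set subset_fst_image_prod_snd_image
    _ = (∫⁻ a in Prod.fst '' S, ENNReal.ofReal (‖a‖ ^ (-α)) ∂μ) * ν (Prod.snd '' S) := by
        rw [setLIntegral_prod _ (by fun_prop)]
        simp only [lintegral_const, Measure.restrict_apply_univ]
        exact lintegral_mul_const' _ _ hS₂.measure_lt_top.ne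
    _ < ⊤ := ENNReal.mul_lt_top (setLIntegral_norm_rpow_neg_lt_top hα hS₁) hS₂.measure_lt_top

variable [BorelSpace F]

theorem gagliardoEnergy_comp_normalize_fst_lt_top {f : E → G} {K : NNReal}
    (hf : LipschitzOnWith K f (sphere 0 1)) {s p : ℝ} (hs₀ : 0 < s) (hs₁ : s < 1) (hp : 0 < p)
    (hsp : s * p < finrank ℝ E) (hS : IsBounded S) {u : E × F → G}
    (hu : ∀ x : E × F, x.1 ≠ 0 → u x = f (normalize x.1)) :
    gagliardoEnergy s p (μ.prod ν) S u < ⊤ := by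
  have hsp₀ : 0 < s * p := mul_pos hs₀ hp
  have : Nontrivial E := nontrivial_of_finrank_pos (R := ℝ) (by exact_mod_cast hsp₀.trans hsp)
  obtain ⟨θ, hspθ, hθ⟩ : ∃ θ, s * p < θ ∧ θ < min p (finrank ℝ E) :=
    exists_between (lt_min (mul_lt_of_lt_one_left hp hs₁) hsp)
  obtain ⟨hθp, hθE⟩ := lt_min_iff.1 hθ
  have hθ₀ : 0 ≤ θ := (hsp₀.trans hspθ).le
  have hfst : ∀ᵐ x ∂μ.prod ν, x.1 ≠ 0 :=
    Measure.quasiMeasurePreserving_fst.ae (Measure.ae_ne μ 0)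
  refine gagliardoEnergy_lt_top_of_weighted_holder hspθ hS
    (w := fun x ↦ K ^ p * 2 ^ p * ‖x.1‖ ^ (-θ)) ?_ ?_
  · simp only [ENNReal.ofReal_mul (show (0 : ℝ) ≤ K ^ p * 2 ^ p by positivity)]
    rw [lintegral_const_mul' _ _ ENNReal.ofReal_ne_top]
    exact ENNReal.mul_lt_top ENNReal.ofReal_lt_top (setLIntegral_norm_fst_rpow_neg_lt_top hθE hS)
  · filter_upwards [hfst] with x hx
    filter_upwards [hfst] with y hy
    rw [hu x hx, hu y hy]
    refine (norm_comp_normalize_sub_rpow_le hf hx hy hθ₀ hθp.le).trans ?_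
    gcongr
    exact norm_fst_le (y - x)

theorem statement15_general {f : E → G} {K : NNReal} (hf : LipschitzOnWith K f (sphere 0 1))
    {s p : ℝ} (hs₀ : 0 < s) (hs₁ : s < 1) (hp : 0 < p) (hsp : s * p < finrank ℝ E)
    (hS : IsBounded S) {u : E × F → G} (hu : ∀ x : E × F, x.1 ≠ 0 → u x = f (‖x.1‖⁻¹ • x.1)) :
    ∫⁻ x in S, ∫⁻ y in S, ENNReal.ofReal (‖u y - u x‖ ^ p /
      √(‖y.1 - x.1‖ ^ 2 + ‖y.2 - x.2‖ ^ 2) ^ (finrank ℝ (E × F) + s * p))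
        ∂μ.prod ν ∂μ.prod ν < ⊤ :=
  (lintegral_lintegral_sqrt_kernel_le_gagliardoEnergy (mul_pos hs₀ hp).le _ S u).trans_lt
    (gagliardoEnergy_comp_normalize_fst_lt_top hf hs₀ hs₁ hp hsp hS hu)

end Product

/-- for `2 ≤ p < m` and `k = ⌊p⌋`, the zero-homogeneous (in the first `k`
variables) extension `u(x', x'') = f(x'/|x'|)` of a Lipschitz map `f : S^{k-1} → ℝ^ν` has
finite Gagliardo `E^{1-1/p,p}` energy on the unit ball of `ℝ^{m-1} = ℝ^k × ℝ^{m-1-k}`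
(the kernel uses the Euclidean distance, with exponent `(m-1) + (p-1) = m + p - 2`). -/
theorem statement15 (ν m : ℕ) (hν : 1 ≤ ν) (hm : 3 ≤ m)
    (p : ℝ) (hp2 : 2 ≤ p) (hpm : p < m) (k : ℕ) (hk : k = ⌊p⌋₊)
    (f : EuclideanSpace ℝ (Fin k) → EuclideanSpace ℝ (Fin ν))
    (K : NNReal) (hf : LipschitzOnWith K f (sphere 0 1)) :
    ∀ u : EuclideanSpace ℝ (Fin k) × EuclideanSpace ℝ (Fin (m - 1 - k)) →
        EuclideanSpace ℝ (Fin ν),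
      (∀ x : EuclideanSpace ℝ (Fin k) × EuclideanSpace ℝ (Fin (m - 1 - k)),
        x.1 ≠ 0 → u x = f (‖x.1‖⁻¹ • x.1)) →
      (∫⁻ x in {x : EuclideanSpace ℝ (Fin k) × EuclideanSpace ℝ (Fin (m - 1 - k)) |
            ‖x.1‖ ^ 2 + ‖x.2‖ ^ 2 < 1},
        ∫⁻ y in {y : EuclideanSpace ℝ (Fin k) × EuclideanSpace ℝ (Fin (m - 1 - k)) |
            ‖y.1‖ ^ 2 + ‖y.2‖ ^ 2 < 1},
          ENNReal.ofReal (‖u y - u x‖ ^ p /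
            Real.sqrt (‖y.1 - x.1‖ ^ 2 + ‖y.2 - x.2‖ ^ 2) ^ ((m : ℝ) + p - 2))) < ⊤ := by
  intro u hu
  have hp : 0 < p := by linarith
  have hkm : k < m := by exact_mod_cast (hk ▸ Nat.floor_le hp.le : (k : ℝ) ≤ p).trans_lt hpm
  have hdim : k + (m - 1 - k) + 1 = m := by omega
  have hsp : (1 - 1 / p) * p = p - 1 := by field_simp
  have hexp : (m : ℝ) + p - 2 = finrank ℝ (EuclideanSpace ℝ (Fin k) ×
      EuclideanSpace ℝ (Fin (m - 1 - k))) + (1 - 1 / p) * p := by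
    rw [hsp, finrank_prod, finrank_euclideanSpace_fin, finrank_euclideanSpace_fin]
    linarith [(by exact_mod_cast hdim : ((k + (m - 1 - k) : ℕ) : ℝ) + 1 = m)]
  rw [hexp]
  refine statement15_general hf (s := 1 - 1 / p) ?_ ?_ hp ?_
    (isBounded_setOf_norm_sq_add_norm_sq_lt 1) hu
  · exact sub_pos.2 ((div_lt_one hp).2 (by linarith))
  · exact sub_lt_self 1 (by positivity)
  · rw [hsp, finrank_euclideanSpace_fin]
    linarith [(hk ▸ Nat.lt_floor_add_one p : p < k + 1)]

end
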